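/- Let N ≥ 1, s ∈ (0,1), let G be a Young function satisfying the growth condition with exponents 1 < p⁻ ≤ p⁺ < ∞, and let Ω be a nonempty open subset of ℝ^N with |Ω| < ∞. Then there exists a nonnegative function u ∈ C_c^∞(Ω) such that ∬_{Ω×Ω} G(|u(x)−u(y)|/|x−y|^s) |x−y|^{−N} dx dy < ∬_{Ω*×Ω*} G(|u*(x)−u*(y)|/|x−y|^s) |x−y|^{−N} dx dy. In other words, the Pólya–Szegő inequality for the fractional Orlicz–Sobolev seminorm restricted to a domain fails. -/

import Mathlib

open MeasureTheory Metric Set Filter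
open scoped ENNReal Topology

/-- The volume of the unit ball in `ℝ^N`. -/
noncomputable def ballVol (N : ℕ) : ℝ≥0∞ :=
  volume (Metric.ball (0 : EuclideanSpace ℝ (Fin N)) 1)

/-- The symmetric rearrangement `Ω*` of a set: the open ball centered at the origin
with the same volume. -/
noncomputable def rearrangeSet {N : ℕ} (Ω : Set (EuclideanSpace ℝ (Fin N))) :
    Set (EuclideanSpace ℝ (Fin N)) :=
  Metric.ball 0 (((volume Ω).toReal / (ballVol N).toReal) ^ ((N : ℝ)⁻¹))

/-- The symmetric decreasing rearrangement `u*` of a nonnegative function: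
`u* x = sup {t > 0 : |{u > t}| > α_N |x|^N}` (with `sup ∅ = 0`). -/
noncomputable def rearrangeFun {N : ℕ} (u : EuclideanSpace ℝ (Fin N) → ℝ)
    (x : EuclideanSpace ℝ (Fin N)) : ℝ :=
  sSup {t : ℝ | 0 < t ∧ ballVol N * ENNReal.ofReal (‖x‖ ^ N) < volume {y | t < u y}}

/-- `G` is a Young function with right-continuous nondecreasing density `g`. -/
structure IsYoungPair (G g : ℝ → ℝ) : Prop where
  g_zero : g 0 = 0
  g_pos : ∀ t > 0, 0 < g t
  g_mono : MonotoneOn g (Set.Ici 0)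
  g_rightCont : ∀ t ≥ 0, ContinuousWithinAt g (Set.Ici t) t
  g_tendsto : Filter.Tendsto g Filter.atTop Filter.atTop
  G_eq : ∀ t ≥ 0, G t = ∫ τ in (0:ℝ)..t, g τ

/-- The growth condition `pm ≤ t g(t)/G(t) ≤ pp` with exponents `1 < pm ≤ pp < ∞`. -/
def GrowthCond (G g : ℝ → ℝ) (pm pp : ℝ) : Prop :=
  1 < pm ∧ pm ≤ pp ∧ ∀ t > 0, pm * G t ≤ t * g t ∧ t * g t ≤ pp * G t

/-- The fractional Orlicz–Sobolev seminorm
`∬_{A×B} G(|u x − u y|/|x−y|^s) |x−y|^{−N} dx dy`. -/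
noncomputable def fracSeminorm {N : ℕ} (s : ℝ) (G : ℝ → ℝ)
    (u : EuclideanSpace ℝ (Fin N) → ℝ) (A B : Set (EuclideanSpace ℝ (Fin N))) : ℝ≥0∞ :=
  ∫⁻ x in A, ∫⁻ y in B,
    ENNReal.ofReal (G (|u x - u y| / dist x y ^ s) / dist x y ^ (N : ℝ))

/-- `u ∈ C_c^∞(Ω)`. -/
def IsTestFun {N : ℕ} (Ω : Set (EuclideanSpace ℝ (Fin N)))
    (u : EuclideanSpace ℝ (Fin N) → ℝ) : Prop :=
  ContDiff ℝ (⊤ : ℕ∞) u ∧ HasCompactSupport u ∧ tsupport u ⊆ Ω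

/-!
Let `ball 0 R` have the volume of `Ω`. Two distinct balls of radius `R` cannot both lie in `Ω` up
to null sets, so `ball a R \ Ω` has positive measure for some interior point `a`. Take for `u` a
smooth radial bump `v` translated to `a` and positive exactly on a small ball `b ⊆ Ω - a`; then
`u* = v`.

Since the integrand vanishes where `v x = v y`, the seminorm of `v` over `A ⊇ b` is its seminorm
over `b` plus twice `∫_{A \ b} K`, where `K y` is the integral of the kernel in `x` over `b`.
Outside `b` the potential `K` depends only on `‖y‖` and decreases strictly, because moving `y`
radially inwards shortens its distance to every point of `b`. By the bathtub principle the centered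
ball then beats the set `A = Ω - a` of the same volume. The comparison is strict because all these
integrals are finite: as `v` is Lipschitz and `G t = O(t ^ α)` at `0` for some `α > 0`, the kernel
is `O(‖x - y‖ ^ (α * (1 - s) - N))` near the diagonal.
-/

section SymmetricKernel

variable {X : Type*} [MeasurableSpace X] {μ : Measure X} {A B b : Set X}

lemma setLIntegral_lt_setLIntegral_of_le_of_lt {K : X → ℝ≥0∞} (hK : Measurable K)
    (hA : MeasurableSet A) (hB : MeasurableSet B) (hAB : μ A = μ B) (hAtop : μ A ≠ ⊤)
    (hBA : μ (B \ A) ≠ 0) {κ : ℝ≥0∞} (hKA : ∀ x ∈ A \ B, K x ≤ κ) (hKB : ∀ x ∈ B \ A, κ < K x)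
    (hfin : ∫⁻ x in A, K x ∂μ ≠ ⊤) :
    ∫⁻ x in A, K x ∂μ < ∫⁻ x in B, K x ∂μ := by
  have hμ : μ (A \ B) = μ (B \ A) := by
    have hadd : μ (A \ B) + μ (A ∩ B) = μ (B \ A) + μ (A ∩ B) := by
      rw [measure_sdiff_add_inter A hB, inter_comm, measure_sdiff_add_inter B hA, hAB]
    exact (ENNReal.add_left_inj (measure_ne_top_of_subset inter_subset_left hAtop)).1 hadd
  have hκ : κ ≠ ⊤ := by
    obtain ⟨x, hx⟩ := nonempty_of_measure_ne_zero hBA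
    exact (hKB x hx).ne_top
  have hsdiff : ∫⁻ x in A \ B, K x ∂μ < ∫⁻ x in B \ A, K x ∂μ :=
    calc ∫⁻ x in A \ B, K x ∂μ ≤ ∫⁻ _ in A \ B, κ ∂μ := setLIntegral_mono' (hA.diff hB) hKA
      _ = ∫⁻ _ in B \ A, κ ∂μ := by rw [setLIntegral_const, setLIntegral_const, hμ]
      _ < ∫⁻ x in B \ A, K x ∂μ := by
        refine setLIntegral_strict_mono (hB.diff hA) hBA hK ?_ (ae_of_all _ hKB)
        rw [setLIntegral_const, ← hμ]
        exact ENNReal.mul_ne_top hκ (measure_ne_top_of_subset sdiff_subset hAtop)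
  rw [← lintegral_inter_add_sdiff K A hB] at hfin ⊢
  rw [← lintegral_inter_add_sdiff K B hA, inter_comm B A]
  exact ENNReal.add_lt_add_left (ENNReal.add_ne_top.1 hfin).1 hsdiff

variable [SFinite μ] {k : X → X → ℝ≥0∞}

lemma setLIntegral_setLIntegral_eq_add_two_mul (hk : Measurable (Function.uncurry k))
    (hsymm : ∀ x y, k x y = k y x) (h0 : ∀ x ∉ b, ∀ y ∉ b, k x y = 0) (hA : MeasurableSet A)
    (hb : MeasurableSet b) (hbA : b ⊆ A) :
    ∫⁻ x in A, ∫⁻ y in A, k x y ∂μ ∂μ =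
      (∫⁻ x in b, ∫⁻ y in b, k x y ∂μ ∂μ) + 2 * ∫⁻ x in A \ b, ∫⁻ y in b, k x y ∂μ ∂μ := by
  have split (f : X → ℝ≥0∞) :
      ∫⁻ x in A, f x ∂μ = (∫⁻ x in b, f x ∂μ) + ∫⁻ x in A \ b, f x ∂μ := by
    rw [← lintegral_inter_add_sdiff f A hb, inter_eq_self_of_subset_right hbA]
  have outer : ∫⁻ x in A \ b, ∫⁻ y in A, k x y ∂μ ∂μ =
      ∫⁻ x in A \ b, ∫⁻ y in b, k x y ∂μ ∂μ := by
    refine setLIntegral_congr_fun (hA.diff hb) fun x hx => ?_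
    have hzero : ∫⁻ y in A \ b, k x y ∂μ = 0 :=
      setLIntegral_eq_zero (hA.diff hb) fun y hy => h0 x hx.2 y hy.2
    simp only [split, hzero, add_zero]
  have cross : ∫⁻ x in b, ∫⁻ y in A \ b, k x y ∂μ ∂μ =
      ∫⁻ x in A \ b, ∫⁻ y in b, k x y ∂μ ∂μ := by
    rw [lintegral_lintegral_swap hk.aemeasurable]
    simp only [hsymm]
  calc ∫⁻ x in A, ∫⁻ y in A, k x y ∂μ ∂μ
      = (∫⁻ x in b, ((∫⁻ y in b, k x y ∂μ) + ∫⁻ y in A \ b, k x y ∂μ) ∂μ) +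
          ∫⁻ x in A \ b, ∫⁻ y in b, k x y ∂μ ∂μ := by
        rw [← outer]
        simp only [← split]
    _ = _ := by rw [lintegral_add_left hk.lintegral_prod_right, cross, add_assoc, ← two_mul]

lemma setLIntegral_setLIntegral_lt_of_le_of_lt (hk : Measurable (Function.uncurry k))
    (hsymm : ∀ x y, k x y = k y x) (h0 : ∀ x ∉ b, ∀ y ∉ b, k x y = 0) (hA : MeasurableSet A)
    (hB : MeasurableSet B) (hb : MeasurableSet b) (hbA : b ⊆ A) (hbB : b ⊆ B) (hAB : μ A = μ B)
    (hAtop : μ A ≠ ⊤) (hBA : μ (B \ A) ≠ 0) {κ : ℝ≥0∞}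
    (hkA : ∀ x ∈ A \ B, ∫⁻ y in b, k x y ∂μ ≤ κ) (hkB : ∀ x ∈ B \ A, κ < ∫⁻ y in b, k x y ∂μ)
    (hfin : ∫⁻ x in A, ∫⁻ y in A, k x y ∂μ ∂μ ≠ ⊤) :
    ∫⁻ x in A, ∫⁻ y in A, k x y ∂μ ∂μ < ∫⁻ x in B, ∫⁻ y in B, k x y ∂μ ∂μ := by
  have hbtop : μ b ≠ ⊤ := measure_ne_top_of_subset hbA hAtop
  have hsdiff {S T : Set X} (hbT : b ⊆ T) : (S \ b) \ (T \ b) = S \ T := by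
    rw [sdiff_sdiff_sdiff_cancel_right hbT]
  rw [setLIntegral_setLIntegral_eq_add_two_mul hk hsymm h0 hA hb hbA] at hfin ⊢
  rw [setLIntegral_setLIntegral_eq_add_two_mul hk hsymm h0 hB hb hbB]
  obtain ⟨hbfin, hAfin⟩ := ENNReal.add_ne_top.1 hfin
  refine ENNReal.add_lt_add_left hbfin
    ((ENNReal.mul_lt_mul_iff_right two_ne_zero ENNReal.ofNat_ne_top).2 ?_)
  refine setLIntegral_lt_setLIntegral_of_le_of_lt (κ := κ) hk.lintegral_prod_right (hA.diff hb)
    (hB.diff hb) ?_ (measure_ne_top_of_subset sdiff_subset hAtop) (by rwa [hsdiff hbA])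
    (by rwa [hsdiff hbB]) (by rwa [hsdiff hbA]) ?_
  · rw [measure_sdiff hbA hb.nullMeasurableSet hbtop, measure_sdiff hbB hb.nullMeasurableSet hbtop,
      hAB]
  · exact fun h => hAfin (by rw [h, ENNReal.mul_top two_ne_zero])

end SymmetricKernel

/-- The integrand of the fractional Orlicz–Sobolev seminorm, on an arbitrary metric space; the
dimension enters only as the exponent `d` of the singular weight. -/
noncomputable def orliczKernel {X : Type*} [PseudoMetricSpace X] (d s : ℝ) (G : ℝ → ℝ)
    (v : X → ℝ) (x y : X) : ℝ≥0∞ :=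
  ENNReal.ofReal (G (|v x - v y| / dist x y ^ s) / dist x y ^ d)

section Kernel

variable {X : Type*} [PseudoMetricSpace X] {d s : ℝ} {G : ℝ → ℝ} {v : X → ℝ} {x y z : X}

lemma orliczKernel_comm (x y : X) : orliczKernel d s G v x y = orliczKernel d s G v y x := by
  simp only [orliczKernel, abs_sub_comm (v x), dist_comm x]

lemma orliczKernel_eq_zero (hG0 : G 0 = 0) (h : v x = v y) : orliczKernel d s G v x y = 0 := by
  simp [orliczKernel, h, hG0]

lemma measurable_orliczKernel [SecondCountableTopology X] [MeasurableSpace X]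
    [OpensMeasurableSpace X] (hG : MonotoneOn G (Ici 0)) (hv : Measurable v) :
    Measurable (Function.uncurry (orliczKernel d s G v)) := by
  have hGmax : Measurable fun t => G (max 0 t) :=
    Monotone.measurable fun a b hab =>
      hG (le_max_left 0 a) (le_max_left 0 b) (max_le_max_left 0 hab)
  have hosc : Measurable fun p : X × X => |v p.1 - v p.2| :=
    ((hv.comp measurable_fst).sub (hv.comp measurable_snd)).norm
  have hdist : Measurable fun p : X × X => dist p.1 p.2 := measurable_dist
  have hmax : Function.uncurry (orliczKernel d s G v) = fun p => ENNReal.ofReal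
      (G (max 0 (|v p.1 - v p.2| / dist p.1 p.2 ^ s)) / dist p.1 p.2 ^ d) := by
    funext p
    rw [max_eq_right (by positivity)]
    rfl
  rw [hmax]
  exact ((hGmax.comp (hosc.div (hdist.pow_const s))).div (hdist.pow_const d)).ennreal_ofReal

lemma orliczKernel_lt_of_dist_lt (hd : 0 < d) (hs : 0 ≤ s) (hG : MonotoneOn G (Ici 0))
    (hGpos : ∀ t > 0, 0 < G t) (hyz : v y = v z) (hzx : v z ≠ v x) (hy : 0 < dist y x)
    (hlt : dist y x < dist z x) : orliczKernel d s G v z x < orliczKernel d s G v y x := by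
  have hz : 0 < dist z x := hy.trans hlt
  have : 0 < |v z - v x| := abs_pos.2 (sub_ne_zero.2 hzx)
  have hGy : 0 < G (|v z - v x| / dist y x ^ s) := hGpos _ (by positivity)
  unfold orliczKernel
  rw [hyz]
  refine (ENNReal.ofReal_lt_ofReal_iff (by positivity)).2 ?_
  calc G (|v z - v x| / dist z x ^ s) / dist z x ^ d
      ≤ G (|v z - v x| / dist y x ^ s) / dist z x ^ d := by
        gcongr
        exact hG (mem_Ici.2 (by positivity)) (mem_Ici.2 (by positivity)) (by gcongr)
    _ < G (|v z - v x| / dist y x ^ s) / dist y x ^ d := by gcongr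

lemma orliczKernel_le_ofReal_rpow {C L α : ℝ} (hs : s ≤ 1) (hα : 0 ≤ α) (hC : 0 ≤ C)
    (hGC : ∀ t ∈ Icc 0 L, G t ≤ C * t ^ α) (hv : |v x - v y| ≤ L * dist x y)
    (hpos : 0 < dist x y) (hle : dist x y ≤ 1) :
    orliczKernel d s G v x y ≤ ENNReal.ofReal (C * L ^ α * dist x y ^ (α * (1 - s) - d)) := by
  have hL : 0 ≤ L := (mul_nonneg_iff_of_pos_right hpos).1 ((abs_nonneg _).trans hv)
  refine ENNReal.ofReal_le_ofReal ?_
  set ρ := dist x y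
  set t := |v x - v y| / ρ ^ s
  have ht : 0 ≤ t := by positivity
  have htρ : t ≤ L * ρ ^ (1 - s) := by
    rw [div_le_iff₀ (by positivity), mul_assoc, ← Real.rpow_add hpos, sub_add_cancel,
      Real.rpow_one]
    exact hv
  have htL : t ≤ L :=
    htρ.trans (mul_le_of_le_one_right hL (Real.rpow_le_one hpos.le hle (sub_nonneg.2 hs)))
  calc G t / ρ ^ d ≤ C * (L * ρ ^ (1 - s)) ^ α / ρ ^ d := by
        gcongr
        exact (hGC t ⟨ht, htL⟩).trans (by gcongr)
    _ = C * L ^ α * ρ ^ (α * (1 - s) - d) := by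
        rw [Real.mul_rpow hL (by positivity), ← Real.rpow_mul hpos.le, Real.rpow_sub hpos,
          mul_comm α]
        ring

lemma orliczKernel_le_of_one_le_dist {M : ℝ} (hd : 0 ≤ d) (hs : 0 ≤ s)
    (hG : MonotoneOn G (Ici 0)) (hG0 : G 0 = 0) (hv : |v x - v y| ≤ M) (hdist : 1 ≤ dist x y) :
    orliczKernel d s G v x y ≤ ENNReal.ofReal (G M) := by
  have hM : 0 ≤ M := (abs_nonneg _).trans hv
  have hGM : 0 ≤ G M := hG0 ▸ hG self_mem_Ici hM hM
  have hosc : |v x - v y| / dist x y ^ s ≤ M :=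
    (div_le_self (abs_nonneg _) (Real.one_le_rpow hdist hs)).trans hv
  refine ENNReal.ofReal_le_ofReal ?_
  calc G (|v x - v y| / dist x y ^ s) / dist x y ^ d ≤ G M / dist x y ^ d := by
        gcongr
        exact hG (mem_Ici.2 (by positivity)) hM hosc
    _ ≤ G M := div_le_self hGM (Real.one_le_rpow hdist hd)

end Kernel

lemma exists_forall_Icc_le_mul_rpow {G : ℝ → ℝ} {α : ℝ} (hα : 0 < α) (hG : MonotoneOn G (Ici 0))
    (hG0 : G 0 = 0) (hO : G =O[𝓝[>] 0] fun t => t ^ α) (T : ℝ) :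
    ∃ C, 0 ≤ C ∧ ∀ t ∈ Icc 0 T, G t ≤ C * t ^ α := by
  obtain ⟨c, hc, hbound⟩ := hO.exists_pos
  obtain ⟨δ, hδ, hδc⟩ := mem_nhdsGT_iff_exists_Ioo_subset.1 hbound.bound
  rw [mem_Ioi] at hδ
  refine ⟨max c (G T / δ ^ α), le_max_of_le_left hc.le, fun t ⟨ht, htT⟩ => ?_⟩
  rcases ht.eq_or_lt with rfl | ht
  · simp [hG0, Real.zero_rpow hα.ne']
  rcases lt_or_ge t δ with htδ | hδt
  · calc G t ≤ ‖G t‖ := Real.le_norm_self _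
      _ ≤ c * ‖t ^ α‖ := hδc ⟨ht, htδ⟩
      _ = c * t ^ α := by rw [Real.norm_of_nonneg (by positivity)]
      _ ≤ max c (G T / δ ^ α) * t ^ α := by gcongr; exact le_max_left _ _
  · have hGT : G t ≤ G T := hG ht.le (ht.le.trans htT) htT
    have hGT0 : 0 ≤ G T := hG0 ▸ hG self_mem_Ici (ht.le.trans htT) (ht.le.trans htT)
    calc G t ≤ G T / δ ^ α * δ ^ α := by rwa [div_mul_cancel₀ _ (by positivity)]
      _ ≤ G T / δ ^ α * t ^ α := by gcongr
      _ ≤ max c (G T / δ ^ α) * t ^ α := by gcongr; exact le_max_right _ _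

lemma orliczKernel_le_indicator_add {E : Type*} [NormedAddCommGroup E] {d s α C M : ℝ}
    {G : ℝ → ℝ} {v : E → ℝ} (hd : 0 ≤ d) (hs : s ∈ Icc 0 1) (hα : 0 ≤ α)
    (hG : MonotoneOn G (Ici 0)) (hG0 : G 0 = 0) (hC : 0 ≤ C) {L : NNReal}
    (hGC : ∀ t ∈ Icc 0 (L : ℝ), G t ≤ C * t ^ α) (hL : LipschitzWith L v)
    (hM : ∀ x y, |v x - v y| ≤ M) (x y : E) :
    orliczKernel d s G v x y ≤
      (ball 0 1).indicator (fun z => ENNReal.ofReal (C * L ^ α * ‖z‖ ^ (α * (1 - s) - d))) (y - x) +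
        ENNReal.ofReal (G M) := by
  have hdist : dist x y = ‖y - x‖ := by rw [dist_comm, dist_eq_norm]
  rcases eq_or_ne x y with rfl | hxy
  · simp [orliczKernel_eq_zero hG0]
  rcases lt_or_ge (dist x y) 1 with hlt | hge
  · refine le_add_right ?_
    rw [indicator_of_mem (by simpa [hdist] using hlt), ← hdist]
    exact orliczKernel_le_ofReal_rpow hs.2 hα hC hGC
      (by simpa [Real.dist_eq] using hL.dist_le_mul x y) (dist_pos.2 hxy) hlt.le
  · exact le_add_left (orliczKernel_le_of_one_le_dist hd hs.1 hG hG0 (hM x y) hge)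

section Finiteness

variable {E : Type*} [NormedAddCommGroup E] [NormedSpace ℝ E] [FiniteDimensional ℝ E]
  [Nontrivial E] [MeasurableSpace E] [BorelSpace E] {μ : Measure E} [μ.IsAddHaarMeasure]
  {s α : ℝ} {G : ℝ → ℝ} {v : E → ℝ} {A : Set E}

lemma integrableOn_ball_norm_rpow {β R : ℝ} (hβ : -Module.finrank ℝ E < β) (hR : 0 < R) :
    IntegrableOn (fun z : E => ‖z‖ ^ β) (ball 0 R) μ := by
  refine (integrableOn_fun_norm_addHaar μ (f := fun t => t ^ β)).2 ?_
  have hdim : 1 ≤ Module.finrank ℝ E := Module.finrank_pos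
  have hint : IntegrableOn (fun t : ℝ => t ^ (Module.finrank ℝ E - 1 + β)) (Ioo 0 R) :=
    (intervalIntegral.integrableOn_Ioo_rpow_iff hR).2 (by linarith)
  refine hint.congr_fun (fun t ht => ?_) measurableSet_Ioo
  rw [smul_eq_mul, ← Real.rpow_natCast, ← Real.rpow_add ht.1, Nat.cast_sub hdim, Nat.cast_one]

lemma exists_setLIntegral_orliczKernel_le (hs : s ∈ Ico 0 1) (hα : 0 < α)
    (hG : MonotoneOn G (Ici 0)) (hG0 : G 0 = 0) (hO : G =O[𝓝[>] 0] fun t => t ^ α) {L : NNReal}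
    (hL : LipschitzWith L v) {M : ℝ} (hM : ∀ x y, |v x - v y| ≤ M) (hA : μ A ≠ ⊤) :
    ∃ C ≠ ⊤, ∀ x, ∫⁻ y in A, orliczKernel (Module.finrank ℝ E) s G v x y ∂μ ≤ C := by
  obtain ⟨C, hC, hGC⟩ := exists_forall_Icc_le_mul_rpow hα hG hG0 hO L
  set β : ℝ := α * (1 - s) - Module.finrank ℝ E
  have hβ : -Module.finrank ℝ E < β := by
    linarith [mul_pos hα (sub_pos.2 hs.2)]
  set near : E → ℝ≥0∞ := (ball 0 1).indicator fun z => ENNReal.ofReal (C * L ^ α * ‖z‖ ^ β)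
  have hnear : ∫⁻ z, near z ∂μ ≠ ⊤ := by
    rw [lintegral_indicator measurableSet_ball]
    exact (IntegrableOn.setLIntegral_lt_top
      (Integrable.const_mul (integrableOn_ball_norm_rpow hβ one_pos) _)).ne
  refine ⟨(∫⁻ z, near z ∂μ) + ENNReal.ofReal (G M) * μ A,
    ENNReal.add_ne_top.2 ⟨hnear, ENNReal.mul_ne_top ENNReal.ofReal_ne_top hA⟩, fun x => ?_⟩
  calc ∫⁻ y in A, orliczKernel (Module.finrank ℝ E) s G v x y ∂μ
      ≤ ∫⁻ y in A, (near (y - x) + ENNReal.ofReal (G M)) ∂μ := lintegral_mono fun y =>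
        orliczKernel_le_indicator_add (Nat.cast_nonneg _) ⟨hs.1, hs.2.le⟩ hα.le hG hG0 hC hGC
          hL hM x y
    _ = (∫⁻ y in A, near (y - x) ∂μ) + ENNReal.ofReal (G M) * μ A := by
        rw [lintegral_add_right _ measurable_const, setLIntegral_const]
    _ ≤ (∫⁻ y, near (y - x) ∂μ) + ENNReal.ofReal (G M) * μ A :=
        add_le_add_left (setLIntegral_le_lintegral A _) _
    _ = (∫⁻ z, near z ∂μ) + ENNReal.ofReal (G M) * μ A := by rw [lintegral_sub_right_eq_self near x]

end Finiteness

section Radial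

variable {E : Type*} [NormedAddCommGroup E] [InnerProductSpace ℝ E]

lemma dist_smul_lt_dist {x z : E} {c : ℝ} (hc : c < 1) (hx : ‖x‖ < c * ‖z‖) :
    dist (c • z) x < dist z x := by
  have hz : 0 < ‖z‖ := by
    refine (norm_nonneg z).lt_of_ne fun h => ?_
    rw [← h, mul_zero] at hx
    exact hx.not_ge (norm_nonneg x)
  have hinner : 2 * inner ℝ z x < (1 + c) * ‖z‖ ^ 2 :=
    calc 2 * inner ℝ z x ≤ 2 * (‖z‖ * ‖x‖) := by gcongr; exact real_inner_le_norm z x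
      _ < 2 * (‖z‖ * (c * ‖z‖)) := by gcongr
      _ = 2 * c * ‖z‖ ^ 2 := by ring
      _ < (1 + c) * ‖z‖ ^ 2 := by gcongr; linarith
  rw [dist_eq_norm, dist_eq_norm, ← sq_lt_sq₀ (norm_nonneg _) (norm_nonneg _), norm_sub_sq_real,
    norm_sub_sq_real, norm_smul, real_inner_smul_left, mul_pow, Real.norm_eq_abs, sq_abs]
  linear_combination (1 - c) * hinner

variable [FiniteDimensional ℝ E] [MeasurableSpace E] [BorelSpace E] {d s r R : ℝ} {G f : ℝ → ℝ}
  {y z : E}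

lemma setLIntegral_ball_orliczKernel_radial_congr (hyz : ‖y‖ = ‖z‖) :
    ∫⁻ x in ball 0 r, orliczKernel d s G (fun x : E => f ‖x‖) y x =
      ∫⁻ x in ball 0 r, orliczKernel d s G (fun x : E => f ‖x‖) z x := by
  obtain ⟨e, rfl⟩ : ∃ e : E ≃ₗᵢ[ℝ] E, e y = z := ⟨_, Submodule.reflection_sub hyz⟩
  have hball : e ⁻¹' ball 0 r = ball 0 r := by ext; simp
  rw [← e.measurePreserving.setLIntegral_comp_preimage_emb e.toHomeomorph.measurableEmbedding
    (orliczKernel d s G (fun x : E => f ‖x‖) (e y)) (ball 0 r), hball]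
  simp only [orliczKernel, e.dist_map, e.norm_map]

lemma setLIntegral_ball_orliczKernel_radial_lt (hd : 0 < d) (hs : 0 ≤ s)
    (hG : MonotoneOn G (Ici 0)) (hGpos : ∀ t > 0, 0 < G t) (hf : Measurable f) (hr : 0 < r)
    (hf0 : ∀ t ≥ 0, f t = 0 ↔ r ≤ t) (hy : r ≤ ‖y‖) (hyz : ‖y‖ < ‖z‖)
    (hfin : ∫⁻ x in ball 0 r, orliczKernel d s G (fun x : E => f ‖x‖) z x ≠ ⊤) :
    ∫⁻ x in ball 0 r, orliczKernel d s G (fun x : E => f ‖x‖) z x <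
      ∫⁻ x in ball 0 r, orliczKernel d s G (fun x : E => f ‖x‖) y x := by
  have hz : 0 < ‖z‖ := hr.trans_le (hy.trans hyz.le)
  set c := ‖y‖ / ‖z‖
  have hc : c < 1 := (div_lt_one hz).2 hyz
  have hcz : c * ‖z‖ = ‖y‖ := div_mul_cancel₀ _ hz.ne'
  have hnorm : ‖c • z‖ = ‖y‖ := by rw [norm_smul, Real.norm_of_nonneg (by positivity), hcz]
  have hf0' {w : E} (hw : r ≤ ‖w‖) : f ‖w‖ = 0 := (hf0 _ (norm_nonneg w)).2 hw
  rw [← setLIntegral_ball_orliczKernel_radial_congr hnorm]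
  refine setLIntegral_strict_mono measurableSet_ball (measure_ball_pos _ _ hr).ne'
    (measurable_orliczKernel hG (hf.comp measurable_norm)).of_uncurry_left hfin
    (ae_of_all _ fun x hx => ?_)
  rw [mem_ball_zero_iff] at hx
  refine orliczKernel_lt_of_dist_lt hd hs hG hGpos ?_ ?_ (dist_pos.2 ?_)
    (dist_smul_lt_dist hc (hcz ▸ hx.trans_le hy))
  · rw [hf0' (hnorm ▸ hy), hf0' (hy.trans hyz.le)]
  · rw [hf0' (hy.trans hyz.le), ne_comm, Ne, hf0 _ (norm_nonneg x)]
    exact hx.not_ge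
  · rintro rfl
    exact hx.not_ge (hnorm ▸ hy)

lemma lintegral_orliczKernel_radial_lt_ball [Nontrivial E] (hd : 0 < d) (hs : 0 ≤ s)
    (hG : MonotoneOn G (Ici 0)) (hG0 : G 0 = 0) (hGpos : ∀ t > 0, 0 < G t) (hf : Measurable f)
    (hr : 0 < r) (hrR : r ≤ R) (hf0 : ∀ t ≥ 0, f t = 0 ↔ r ≤ t) {A : Set E}
    (hA : MeasurableSet A) (hrA : ball 0 r ⊆ A) (hvol : volume A = volume (ball (0 : E) R))
    (hdiff : volume (ball 0 R \ A) ≠ 0)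
    (hpot : ∀ z, ∫⁻ x in ball 0 r, orliczKernel d s G (fun x : E => f ‖x‖) z x ≠ ⊤)
    (hfin : ∫⁻ x in A, ∫⁻ y in A, orliczKernel d s G (fun x : E => f ‖x‖) x y ≠ ⊤) :
    ∫⁻ x in A, ∫⁻ y in A, orliczKernel d s G (fun x : E => f ‖x‖) x y <
      ∫⁻ x in ball 0 R, ∫⁻ y in ball 0 R, orliczKernel d s G (fun x : E => f ‖x‖) x y := by
  obtain ⟨w, hw⟩ := exists_norm_eq E (hr.le.trans hrR)
  have hlt {y z : E} (hy : r ≤ ‖y‖) (hyz : ‖y‖ < ‖z‖) :=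
    setLIntegral_ball_orliczKernel_radial_lt hd hs hG hGpos hf hr hf0 hy hyz (hpot z)
  have hzero (x : E) (hx : x ∉ ball 0 r) : f ‖x‖ = 0 :=
    (hf0 _ (norm_nonneg x)).2 (by simpa using hx)
  refine setLIntegral_setLIntegral_lt_of_le_of_lt (b := ball 0 r)
    (κ := ∫⁻ x in ball 0 r, orliczKernel d s G (fun x : E => f ‖x‖) w x)
    (measurable_orliczKernel hG (hf.comp measurable_norm)) orliczKernel_comm
    (fun x hx y hy => orliczKernel_eq_zero hG0 ((hzero x hx).trans (hzero y hy).symm))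
    hA measurableSet_ball measurableSet_ball hrA (ball_subset_ball hrR) hvol
    (hvol ▸ measure_ball_lt_top.ne) hdiff (fun z hz => ?_) (fun y hy => ?_) hfin
  · have hwz : ‖w‖ ≤ ‖z‖ := by simpa [hw] using hz.2
    rcases hwz.eq_or_lt with heq | hwz
    · exact (setLIntegral_ball_orliczKernel_radial_congr heq.symm).le
    · exact (hlt (hw ▸ hrR) hwz).le
  · have hry : y ∉ ball 0 r := fun h => hy.2 (hrA h)
    exact hlt (by simpa using hry) (by simpa [hw] using hy.1)

end Radial

/-- A radial profile whose composition with the norm is smooth and positive exactly on the ball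
of radius `r`. -/
noncomputable def bumpProfile (r t : ℝ) : ℝ := Real.smoothTransition (r ^ 2 - t ^ 2)

section Bump

variable {E : Type*} [NormedAddCommGroup E] {r : ℝ}

lemma bumpProfile_nonneg (r t : ℝ) : 0 ≤ bumpProfile r t := Real.smoothTransition.nonneg _

lemma bumpProfile_le_one (r t : ℝ) : bumpProfile r t ≤ 1 := Real.smoothTransition.le_one _

lemma bumpProfile_eq_zero_iff (hr : 0 ≤ r) {t : ℝ} (ht : 0 ≤ t) :
    bumpProfile r t = 0 ↔ r ≤ t := by
  rw [bumpProfile, Real.smoothTransition.zero_iff_nonpos, sub_nonpos, sq_le_sq₀ hr ht]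

lemma antitoneOn_bumpProfile (r : ℝ) : AntitoneOn (bumpProfile r) (Ici 0) := fun _ ha _ _ hab =>
  Real.smoothTransition.monotone (sub_le_sub_left (pow_le_pow_left₀ ha hab 2) _)

lemma continuous_bumpProfile (r : ℝ) : Continuous (bumpProfile r) :=
  Real.smoothTransition.continuous.comp (by fun_prop)

lemma tsupport_bumpProfile_norm_sub_subset (hr : 0 ≤ r) (a : E) :
    tsupport (fun y => bumpProfile r ‖y - a‖) ⊆ closedBall a r := by
  refine closure_minimal (fun y hy => ?_) isClosed_closedBall
  rw [mem_closedBall, dist_eq_norm]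
  exact le_of_not_ge fun h => hy ((bumpProfile_eq_zero_iff hr (norm_nonneg _)).2 h)

variable [InnerProductSpace ℝ E]

lemma contDiff_bumpProfile_norm_sub (r : ℝ) (a : E) :
    ContDiff ℝ (⊤ : ℕ∞) fun y => bumpProfile r ‖y - a‖ :=
  Real.smoothTransition.contDiff.comp
    (contDiff_const.sub ((contDiff_id.sub contDiff_const).norm_sq ℝ))

variable [FiniteDimensional ℝ E]

lemma hasCompactSupport_bumpProfile_norm_sub (hr : 0 ≤ r) (a : E) :
    HasCompactSupport fun y => bumpProfile r ‖y - a‖ :=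
  (isCompact_closedBall a r).of_isClosed_subset (isClosed_tsupport _)
    (tsupport_bumpProfile_norm_sub_subset hr a)

lemma exists_lipschitzWith_bumpProfile_norm (hr : 0 ≤ r) :
    ∃ L, LipschitzWith L fun y : E => bumpProfile r ‖y‖ := by
  simpa only [sub_zero] using ContDiff.lipschitzWith_of_hasCompactSupport
    (hasCompactSupport_bumpProfile_norm_sub hr (0 : E)) (contDiff_bumpProfile_norm_sub r 0)
    (by simp)

lemma lintegral_orliczKernel_bumpProfile_lt_ball [Nontrivial E] [MeasurableSpace E] [BorelSpace E]
    {s α R : ℝ} {G : ℝ → ℝ} (hs : s ∈ Ico 0 1) (hα : 0 < α) (hG : MonotoneOn G (Ici 0))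
    (hG0 : G 0 = 0) (hGpos : ∀ t > 0, 0 < G t) (hO : G =O[𝓝[>] 0] fun t => t ^ α) (hr : 0 < r)
    (hrR : r ≤ R) {A : Set E} (hA : MeasurableSet A) (hrA : ball 0 r ⊆ A)
    (hvol : volume A = volume (ball (0 : E) R)) (hdiff : volume (ball 0 R \ A) ≠ 0) :
    ∫⁻ x in A, ∫⁻ y in A,
        orliczKernel (Module.finrank ℝ E) s G (fun x => bumpProfile r ‖x‖) x y <
      ∫⁻ x in ball (0 : E) R, ∫⁻ y in ball (0 : E) R,
        orliczKernel (Module.finrank ℝ E) s G (fun x => bumpProfile r ‖x‖) x y := by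
  obtain ⟨L, hL⟩ := exists_lipschitzWith_bumpProfile_norm (E := E) hr.le
  have hosc (x y : E) : |bumpProfile r ‖x‖ - bumpProfile r ‖y‖| ≤ 1 :=
    abs_sub_le_of_nonneg_of_le (bumpProfile_nonneg _ _) (bumpProfile_le_one _ _)
      (bumpProfile_nonneg _ _) (bumpProfile_le_one _ _)
  have hbound {S : Set E} (hS : volume S ≠ ⊤) :=
    exists_setLIntegral_orliczKernel_le hs hα hG hG0 hO hL hosc hS
  have hAtop : volume A ≠ ⊤ := hvol ▸ measure_ball_lt_top.ne
  obtain ⟨C, hC, hpot⟩ := hbound (measure_ne_top_of_subset hrA hAtop)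
  obtain ⟨D, hD, hAD⟩ := hbound hAtop
  refine lintegral_orliczKernel_radial_lt_ball (Nat.cast_pos.2 Module.finrank_pos) hs.1 hG hG0
    hGpos (continuous_bumpProfile r).measurable hr hrR
    (fun t ht => bumpProfile_eq_zero_iff hr.le ht) hA hrA hvol hdiff
    (fun z => ne_top_of_le_ne_top hC (hpot z)) ?_
  refine ne_top_of_le_ne_top (ENNReal.mul_ne_top hD hAtop) ?_
  exact (lintegral_mono hAD).trans_eq (setLIntegral_const A D)

end Bump

section Balls

variable {E : Type*} [NormedAddCommGroup E] [NormedSpace ℝ E]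

lemma ball_sdiff_closedBall_nonempty {x y : E} (hxy : x ≠ y) {R : ℝ} (hR : 0 < R) :
    (ball y R \ closedBall x R).Nonempty := by
  set δ := ‖y - x‖
  have hδ : 0 < δ := norm_pos_iff.2 (sub_ne_zero.2 hxy.symm)
  obtain ⟨t, htlo, htR⟩ : ∃ t, max 0 (R - δ) < t ∧ t < R :=
    exists_between (max_lt hR (sub_lt_self R hδ))
  obtain ⟨ht, htδ⟩ := max_lt_iff.1 htlo
  refine ⟨y + (t / δ) • (y - x), ?_, ?_⟩
  · rwa [mem_ball, dist_eq_norm, add_sub_cancel_left, norm_smul,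
      Real.norm_of_nonneg (by positivity), div_mul_cancel₀ t hδ.ne']
  · have hcollinear : y + (t / δ) • (y - x) - x = (1 + t / δ) • (y - x) := by module
    rw [mem_closedBall, dist_eq_norm, hcollinear, norm_smul, Real.norm_of_nonneg (by positivity),
      add_mul, div_mul_cancel₀ t hδ.ne']
    linarith

variable [FiniteDimensional ℝ E] [Nontrivial E] [MeasurableSpace E] [BorelSpace E]
  {μ : Measure E} [μ.IsAddHaarMeasure]

lemma exists_mem_interior_measure_ball_sdiff_ne_zero {Ω : Set E} (hΩ : (interior Ω).Nonempty)
    {R : ℝ} (hR : 0 < R) (hle : μ Ω ≤ μ (ball 0 R)) :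
    ∃ a ∈ interior Ω, μ (ball a R \ Ω) ≠ 0 := by
  by_contra! hnull
  obtain ⟨x, hx⟩ := hΩ
  obtain ⟨y, hy, hyx⟩ :=
    (infinite_of_mem_nhds x (isOpen_interior.mem_nhds hx)).nontrivial.exists_ne x
  set U := ball y R \ closedBall x R
  have hUopen : IsOpen U := isOpen_ball.sdiff isClosed_closedBall
  have hUpos : μ U ≠ 0 := (hUopen.measure_pos μ (ball_sdiff_closedBall_nonempty hyx.symm hR)).ne'
  have hdisj : Disjoint (ball x R) U := disjoint_sdiff_right.mono_left ball_subset_closedBall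
  have hsub : (ball x R ∪ U : Set E) ≤ᵐ[μ] Ω := by
    rw [ae_le_set, union_sdiff_distrib]
    exact measure_union_null (hnull x hx)
      (measure_mono_null (sdiff_subset_sdiff_left sdiff_subset) (hnull y hy))
  have : μ (ball 0 R) < μ (ball 0 R) :=
    calc μ (ball 0 R) < μ (ball 0 R) + μ U := ENNReal.lt_add_right measure_ball_lt_top.ne hUpos
      _ = μ (ball x R ∪ U) := by
        rw [measure_union hdisj hUopen.measurableSet, Measure.addHaar_ball_center μ x]
      _ ≤ μ Ω := measure_mono_ae hsub
      _ ≤ μ (ball 0 R) := hle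
  exact this.false

lemma measure_ball_lt_measure_ball (a : E) {ρ σ : ℝ} (hρ : 0 ≤ ρ) (hρσ : ρ < σ) :
    μ (ball a ρ) < μ (ball a σ) := by
  rw [Measure.addHaar_ball μ a hρ, Measure.addHaar_ball μ a (hρ.trans hρσ.le)]
  refine (ENNReal.mul_lt_mul_iff_left (measure_ball_pos μ 0 one_pos).ne'
    measure_ball_lt_top.ne).2 ?_
  exact (ENNReal.ofReal_lt_ofReal_iff (pow_pos (hρ.trans_lt hρσ) _)).2
    (pow_lt_pow_left₀ hρσ hρ Module.finrank_pos.ne')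

lemma measure_ball_lt_measure_superlevel_iff {f : ℝ → ℝ} (hf : ContinuousOn f (Ici 0))
    (hanti : AntitoneOn f (Ici 0)) (a : E) {ρ t : ℝ} (hρ : 0 ≤ ρ) :
    μ (ball a ρ) < μ {y | t < f ‖y - a‖} ↔ t < f ρ := by
  refine ⟨fun h => ?_, fun h => ?_⟩
  · contrapose! h
    refine measure_mono fun y (hy : t < f ‖y - a‖) => ?_
    rw [mem_ball, dist_eq_norm]
    by_contra! hle
    exact hy.not_ge ((hanti hρ (norm_nonneg _) hle).trans h)
  · have hright : ContinuousWithinAt f (Ioi ρ) ρ :=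
      (hf ρ hρ).mono (Ioi_subset_Ici_iff.2 hρ)
    obtain ⟨σ, hσ, hρσ⟩ := ((hright.eventually (lt_mem_nhds h)).and self_mem_nhdsWithin).exists
    have hσ0 : 0 ≤ σ := hρ.trans (le_of_lt hρσ)
    refine (measure_ball_lt_measure_ball a hρ hρσ).trans_le (measure_mono fun y hy => ?_)
    rw [mem_ball, dist_eq_norm] at hy
    exact hσ.trans_le (hanti (norm_nonneg _) hσ0 hy.le)

end Balls

section Rearrangement

variable {N : ℕ}

lemma ballVol_ne_zero : ballVol N ≠ 0 := (measure_ball_pos _ _ one_pos).ne'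

lemma ballVol_ne_top : ballVol N ≠ ⊤ := measure_ball_lt_top.ne

lemma volume_ball_eq_ballVol_mul (hN : 1 ≤ N) (x : EuclideanSpace ℝ (Fin N)) {ρ : ℝ}
    (hρ : 0 ≤ ρ) : volume (ball x ρ) = ballVol N * ENNReal.ofReal (ρ ^ N) := by
  have : Nonempty (Fin N) := ⟨⟨0, hN⟩⟩
  rw [Measure.addHaar_ball volume x hρ, finrank_euclideanSpace_fin, mul_comm, ballVol]

lemma exists_rearrangeSet_eq_ball (hN : 1 ≤ N) {Ω : Set (EuclideanSpace ℝ (Fin N))}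
    (h0 : volume Ω ≠ 0) (htop : volume Ω ≠ ⊤) :
    ∃ R > 0, rearrangeSet Ω = ball 0 R ∧
      volume Ω = volume (ball (0 : EuclideanSpace ℝ (Fin N)) R) := by
  have hq : 0 < (volume Ω).toReal / (ballVol N).toReal :=
    div_pos (ENNReal.toReal_pos h0 htop) (ENNReal.toReal_pos ballVol_ne_zero ballVol_ne_top)
  refine ⟨_, Real.rpow_pos_of_pos hq _, rfl, ?_⟩
  rw [volume_ball_eq_ballVol_mul hN _ (by positivity),
    Real.rpow_inv_natCast_pow hq.le (by omega), ← ENNReal.toReal_div,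
    ENNReal.ofReal_toReal (ENNReal.div_ne_top htop ballVol_ne_zero),
    ENNReal.mul_div_cancel ballVol_ne_zero ballVol_ne_top]

lemma rearrangeFun_radial (hN : 1 ≤ N) {f : ℝ → ℝ} (hf : ContinuousOn f (Ici 0))
    (hanti : AntitoneOn f (Ici 0)) (hnonneg : ∀ t ≥ 0, 0 ≤ f t) (a : EuclideanSpace ℝ (Fin N)) :
    rearrangeFun (fun y => f ‖y - a‖) = fun x => f ‖x‖ := by
  have : Nonempty (Fin N) := ⟨⟨0, hN⟩⟩
  funext x
  have hset : {t : ℝ | 0 < t ∧ ballVol N * ENNReal.ofReal (‖x‖ ^ N) <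
      volume {y | t < f ‖y - a‖}} = Ioo 0 (f ‖x‖) := by
    ext t
    rw [← volume_ball_eq_ballVol_mul hN a (norm_nonneg x), mem_ofPred_eq,
      measure_ball_lt_measure_superlevel_iff hf hanti a (norm_nonneg x), mem_Ioo]
  rw [rearrangeFun, hset]
  rcases (hnonneg ‖x‖ (norm_nonneg x)).eq_or_lt with h | h
  · simp [← h]
  · exact csSup_Ioo h

lemma fracSeminorm_eq_lintegral_orliczKernel (s : ℝ) (G : ℝ → ℝ)
    (v : EuclideanSpace ℝ (Fin N) → ℝ) (A B : Set (EuclideanSpace ℝ (Fin N))) :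
    fracSeminorm s G v A B = ∫⁻ x in A, ∫⁻ y in B,
      orliczKernel (Module.finrank ℝ (EuclideanSpace ℝ (Fin N))) s G v x y := by
  rw [finrank_euclideanSpace_fin]
  rfl

lemma fracSeminorm_comp_sub (s : ℝ) (G : ℝ → ℝ) (v : EuclideanSpace ℝ (Fin N) → ℝ)
    (a : EuclideanSpace ℝ (Fin N)) (A B : Set (EuclideanSpace ℝ (Fin N))) :
    fracSeminorm s G (fun y => v (y - a)) A B =
      fracSeminorm s G v ((· + a) ⁻¹' A) ((· + a) ⁻¹' B) := by
  have shift (f : EuclideanSpace ℝ (Fin N) → ℝ≥0∞) (S : Set (EuclideanSpace ℝ (Fin N))) :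
      ∫⁻ x in S, f x = ∫⁻ x in (· + a) ⁻¹' S, f (x + a) :=
    ((measurePreserving_add_right volume a).setLIntegral_comp_preimage_emb
      (measurableEmbedding_addRight a) f S).symm
  simp only [fracSeminorm, shift _ A, shift _ B, add_sub_cancel_right, dist_add_right]

end Rearrangement

namespace IsYoungPair

variable {G g : ℝ → ℝ}

lemma intervalIntegrable (hY : IsYoungPair G g) {a b : ℝ} (ha : 0 ≤ a) (hb : 0 ≤ b) :
    IntervalIntegrable g volume a b :=
  (hY.g_mono.mono fun _ hx => (le_inf ha hb).trans hx.1).intervalIntegrable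

lemma map_zero (hY : IsYoungPair G g) : G 0 = 0 := by
  rw [hY.G_eq 0 le_rfl, intervalIntegral.integral_same]

lemma strictMonoOn (hY : IsYoungPair G g) : StrictMonoOn G (Ici 0) := by
  intro a ha b hb hab
  rw [hY.G_eq a ha, hY.G_eq b hb, ← intervalIntegral.integral_add_adjacent_intervals
    (hY.intervalIntegrable le_rfl ha) (hY.intervalIntegrable ha hb)]
  exact lt_add_of_pos_right _ (intervalIntegral.intervalIntegral_pos_of_pos_on
    (hY.intervalIntegrable ha hb) (fun t ht => hY.g_pos t (ha.trans_lt ht.1)) hab)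

lemma pos (hY : IsYoungPair G g) {t : ℝ} (ht : 0 < t) : 0 < G t :=
  hY.map_zero ▸ hY.strictMonoOn self_mem_Ici ht.le ht

lemma le_mul (hY : IsYoungPair G g) {t : ℝ} (ht : 0 ≤ t) : G t ≤ t * g t := by
  rw [hY.G_eq t ht]
  calc ∫ τ in (0 : ℝ)..t, g τ ≤ ∫ _ in (0 : ℝ)..t, g t :=
        intervalIntegral.integral_mono_on ht (hY.intervalIntegrable le_rfl ht)
          intervalIntegrable_const fun x hx => hY.g_mono hx.1 ht hx.2
    _ = t * g t := by simp

lemma isBigO_rpow_one (hY : IsYoungPair G g) : G =O[𝓝[>] 0] fun t => t ^ (1 : ℝ) := by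
  refine .of_bound (g 1) ?_
  filter_upwards [Ioo_mem_nhdsGT one_pos] with t ⟨ht, ht1⟩
  rw [Real.rpow_one, Real.norm_of_nonneg (hY.pos ht).le, Real.norm_of_nonneg ht.le]
  calc G t ≤ t * g t := hY.le_mul ht.le
    _ ≤ t * g 1 := by gcongr; exact hY.g_mono ht.le (mem_Ici.2 zero_le_one) ht1.le
    _ = g 1 * t := mul_comm _ _

end IsYoungPair

theorem polya_szego_fails_on_domains_general {N : ℕ} (hN : 1 ≤ N) {s : ℝ} (hs : s ∈ Ico (0 : ℝ) 1)
    {G : ℝ → ℝ} (hG : MonotoneOn G (Ici 0)) (hG0 : G 0 = 0) (hGpos : ∀ t > 0, 0 < G t)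
    {α : ℝ} (hα : 0 < α) (hO : G =O[𝓝[>] 0] fun t => t ^ α)
    {Ω : Set (EuclideanSpace ℝ (Fin N))} (hΩ : MeasurableSet Ω) (hΩint : (interior Ω).Nonempty)
    (hΩfin : volume Ω < ⊤) :
    ∃ u : EuclideanSpace ℝ (Fin N) → ℝ, IsTestFun Ω u ∧ (∀ x, 0 ≤ u x) ∧
      fracSeminorm s G u Ω Ω <
        fracSeminorm s G (rearrangeFun u) (rearrangeSet Ω) (rearrangeSet Ω) := by
  have : Nonempty (Fin N) := ⟨⟨0, hN⟩⟩
  obtain ⟨R, hR, hball, hvol⟩ := exists_rearrangeSet_eq_ball hN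
    (Measure.measure_pos_of_nonempty_interior volume hΩint).ne' hΩfin.ne
  obtain ⟨a, ha, hdiff⟩ := exists_mem_interior_measure_ball_sdiff_ne_zero hΩint hR hvol.le
  obtain ⟨ε, hε, hεΩ⟩ := nhds_basis_closedBall.mem_iff.1 (mem_interior_iff_mem_nhds.1 ha)
  obtain ⟨r, hr, hrε, hrR⟩ : ∃ r > 0, r ≤ ε ∧ r ≤ R :=
    ⟨min ε R, lt_min hε hR, min_le_left _ _, min_le_right _ _⟩
  have hrΩ : closedBall a r ⊆ Ω := (closedBall_subset_closedBall hrε).trans hεΩ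
  have hrA : ball 0 r ⊆ (· + a) ⁻¹' Ω := fun x hx =>
    hrΩ (by simpa using (mem_ball_zero_iff.1 hx).le)
  have hsdiff : ball 0 R \ (· + a) ⁻¹' Ω = (· + a) ⁻¹' (ball a R \ Ω) := by ext; simp
  refine ⟨fun y => bumpProfile r ‖y - a‖, ⟨contDiff_bumpProfile_norm_sub r a,
    hasCompactSupport_bumpProfile_norm_sub hr.le a,
    (tsupport_bumpProfile_norm_sub_subset hr.le a).trans hrΩ⟩, fun _ => bumpProfile_nonneg _ _, ?_⟩
  rw [hball, rearrangeFun_radial hN (continuous_bumpProfile r).continuousOn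
    (antitoneOn_bumpProfile r) (fun t _ => bumpProfile_nonneg r t) a,
    fracSeminorm_comp_sub s G (fun y => bumpProfile r ‖y‖),
    fracSeminorm_eq_lintegral_orliczKernel, fracSeminorm_eq_lintegral_orliczKernel]
  exact lintegral_orliczKernel_bumpProfile_lt_ball hs hα hG hG0 hGpos hO hr hrR
    (hΩ.preimage (measurable_add_const a)) hrA
    (by rw [measure_preimage_add_right, hvol]) (by rwa [hsdiff, measure_preimage_add_right])

/-- failure of the Pólya–Szegő inequality on domains. -/
theorem polya_szego_fails_on_domains
    {N : ℕ} (hN : 1 ≤ N) {s : ℝ} (hs : s ∈ Set.Ioo (0 : ℝ) 1)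
    {G g : ℝ → ℝ} (hY : IsYoungPair G g) {pm pp : ℝ} (hG : GrowthCond G g pm pp)
    {Ω : Set (EuclideanSpace ℝ (Fin N))} (hΩopen : IsOpen Ω) (hΩne : Ω.Nonempty)
    (hΩfin : volume Ω < ⊤) :
    ∃ u : EuclideanSpace ℝ (Fin N) → ℝ, IsTestFun Ω u ∧ (∀ x, 0 ≤ u x) ∧
      fracSeminorm s G u Ω Ω <
        fracSeminorm s G (rearrangeFun u) (rearrangeSet Ω) (rearrangeSet Ω) := by
  exact polya_szego_fails_on_domains_general hN ⟨hs.1.le, hs.2⟩ hY.strictMonoOn.monotoneOn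
    hY.map_zero (fun _ => hY.pos) one_pos hY.isBigO_rpow_one hΩopen.measurableSet
    (hΩopen.interior_eq.symm ▸ hΩne) hΩfin
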